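/- arXiv:math/9903193 — 2 statements merged into one kernel-verified Lean document; each statement's English description precedes it below -/
import Mathlib

section
/- Let Λ be a discrete additive subgroup of ℂ², let p₁, …, pₘ ∈ ℂ², and let Λ₀ = ⋃_{j=1}^{m} (Λ + pⱼ). Then there exists an injective holomorphic map F : ℂ² → ℂ² whose image is disjoint from Λ₀. -/
open Complex

/-!
The proof combines a Fatou–Bieberbach map with an automorphism of `ℂ²`.

The Hénon map `H (z, w) = (4 w, 4 z + w ^ 2)` has a repelling fixed point at `0` with linear part
`L = 4 · swap`. Its Poincaré map `F = lim Hⁿ ∘ L⁻ⁿ` exists on all of `ℂ²`, is holomorphic and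
injective, and satisfies `F ∘ L = H ∘ F`. So points of its image have bounded backward orbit
under `H`, and the image misses the region `max ‖w‖ 144 ≤ ‖z‖`, where backward orbits escape
(`exists_fatouBieberbach`).

It remains to move the translates of `Λ` into that region by an automorphism. A real basis of `ℂ²`
in which `Λ` has integral coordinates, together with simultaneous Diophantine approximation of the
coordinates of the `p j`, yields complex linear coordinates `(z, w)` such that `re z` and `re w` are
within `1 / 6` of integers at all points of the translates (`exists_coordinates`). After a shift of
`z` by `1 / 2`, these points satisfy `‖z‖ ≥ 1 / 3`. The automorphism `(z, w) ↦ (exp (g w) z, w)` then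
sends them into the region as soon as `re (g w)` is large enough on the strips where `re w` is
within `1 / 6` of an integer, and such an entire `g` is explicit (`growth`).
-/

/-! ### The Poincaré map of a Hénon map -/

/-- The complex Hénon map `(z, w) ↦ (4 w, 4 z + w ^ 2)`, an automorphism of `ℂ²` with a repelling
fixed point at `0`. Its linear part there is `4` times the coordinate swap, hence `4` times an
isometry for the sup norm of `ℂ × ℂ`. -/
def henon (x : ℂ × ℂ) : ℂ × ℂ := (4 * x.2, 4 * x.1 + x.2 ^ 2)

/-- The inverse of the linear part of `henon` at the origin. -/
noncomputable def contr (x : ℂ × ℂ) : ℂ × ℂ := (x.2 / 4, x.1 / 4)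

/-- The approximations `henon^[n] ∘ contr^[n]` to the Poincaré map `F` of `henon`, which solves
`F = henon ∘ F ∘ contr`. -/
noncomputable def poincareIter : ℕ → ℂ × ℂ → ℂ × ℂ
  | 0, x => x
  | n + 1, x => henon (poincareIter n (contr x))

lemma norm_contr (x : ℂ × ℂ) : ‖contr x‖ = ‖x‖ / 4 := by
  simp only [contr, Prod.norm_def, norm_div]
  rw [max_comm, max_div_div_right (by positivity)]
  norm_num

lemma differentiable_henon : Differentiable ℂ henon := by unfold henon; fun_prop

lemma differentiable_contr : Differentiable ℂ contr := by unfold contr; fun_prop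

lemma henon_injective : Function.Injective henon := by
  rintro ⟨a, b⟩ ⟨c, d⟩ h
  simp only [henon, Prod.mk.injEq] at h
  have hbd : b = d := by linear_combination h.1 / 4
  subst hbd
  simpa using h.2

lemma contr_injective : Function.Injective contr := by
  rintro ⟨a, b⟩ ⟨c, d⟩ h
  simp only [contr, Prod.mk.injEq] at h
  ext
  · linear_combination 4 * h.2
  · linear_combination 4 * h.1

lemma norm_henon_sub_le (p q : ℂ × ℂ) :
    ‖henon p - henon q‖ ≤ (4 + ‖p‖ + ‖q‖) * ‖p - q‖ := by
  have h1 : ‖p.1 - q.1‖ ≤ ‖p - q‖ := norm_fst_le (p - q)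
  have h2 : ‖p.2 - q.2‖ ≤ ‖p - q‖ := norm_snd_le (p - q)
  have hp := norm_snd_le p
  have hq := norm_snd_le q
  refine max_le ?_ ?_
  · have : (henon p - henon q).1 = 4 * (p.2 - q.2) := by simp [henon]; ring
    rw [this, norm_mul]
    norm_num
    nlinarith [norm_nonneg p, norm_nonneg q, norm_nonneg (p - q),
      mul_nonneg (norm_nonneg p) (norm_nonneg (p - q)),
      mul_nonneg (norm_nonneg q) (norm_nonneg (p - q))]
  · have : (henon p - henon q).2 = 4 * (p.1 - q.1) + (p.2 + q.2) * (p.2 - q.2) := by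
      simp [henon]; ring
    rw [this]
    calc _ ≤ ‖4 * (p.1 - q.1)‖ + ‖(p.2 + q.2) * (p.2 - q.2)‖ := norm_add_le _ _
      _ ≤ 4 * ‖p - q‖ + (‖p‖ + ‖q‖) * ‖p - q‖ := by
        rw [norm_mul, norm_mul]
        have h3 : ‖p.2 + q.2‖ ≤ ‖p‖ + ‖q‖ := (norm_add_le _ _).trans (add_le_add hp hq)
        have h4 : ‖(4 : ℂ)‖ = 4 := by norm_num
        rw [h4]
        gcongr
      _ = _ := by ring

lemma norm_henon_le (p : ℂ × ℂ) : ‖henon p‖ ≤ 4 * ‖p‖ + ‖p‖ ^ 2 := by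
  have h0 : henon 0 = 0 := by simp [henon]
  have := norm_henon_sub_le p 0
  rw [h0, sub_zero, sub_zero, norm_zero] at this
  linarith

/-- The region `max ‖w‖ 144 ≤ ‖z‖` is mapped into itself by the inverse of `henon`. As the image
of the Poincaré map consists of points with bounded backward orbit, it misses this region. -/
lemma henon_escape (p : ℂ × ℂ) (h : max ‖(henon p).2‖ 144 ≤ ‖(henon p).1‖) :
    max ‖p.2‖ 144 ≤ ‖p.1‖ := by
  obtain ⟨h1, h2⟩ := max_le_iff.1 h
  have h4 : ‖(4 : ℂ)‖ = 4 := by norm_num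
  simp only [henon, norm_mul, h4] at h1 h2
  have h3 : ‖p.2 ^ 2‖ ≤ ‖4 * p.1 + p.2 ^ 2‖ + ‖4 * p.1‖ := by
    have := norm_sub_le (4 * p.1 + p.2 ^ 2) (4 * p.1)
    rwa [add_sub_cancel_left] at this
  rw [norm_pow, norm_mul, h4] at h3
  refine max_le ?_ ?_ <;> nlinarith

lemma differentiable_poincareIter (n : ℕ) : Differentiable ℂ (poincareIter n) := by
  induction n with
  | zero => exact differentiable_id
  | succ n ih => exact differentiable_henon.comp (ih.comp differentiable_contr)

lemma norm_poincareIter_le (n : ℕ) (x : ℂ × ℂ) (hx : ‖x‖ ≤ 1) :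
    ‖poincareIter n x‖ ≤ ‖x‖ + ‖x‖ ^ 2 := by
  induction n generalizing x with
  | zero => simp only [poincareIter]; nlinarith [norm_nonneg x]
  | succ n ih =>
    have h := ih (contr x) (by rw [norm_contr]; linarith)
    rw [norm_contr] at h
    have h' := norm_henon_le (poincareIter n (contr x))
    have hs := norm_nonneg (poincareIter n (contr x))
    have hx0 := norm_nonneg x
    set s := ‖poincareIter n (contr x)‖
    have h1 : s ≤ 5 / 16 * ‖x‖ := by nlinarith
    have h2 : s ^ 2 ≤ (5 / 16 * ‖x‖) ^ 2 := by gcongr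
    simp only [poincareIter]
    nlinarith [sq_nonneg ‖x‖]

/-- The differences of consecutive approximations vanish to second order at `0`. This makes up for
the expansion of `henon`: the Lipschitz constant `8` is beaten by the factor `(1 / 4) ^ 2` that
`contr` produces in a quadratic bound. -/
lemma norm_poincareIter_succ_sub_le (n : ℕ) (x : ℂ × ℂ) (hx : ‖x‖ ≤ 1) :
    ‖poincareIter (n + 1) x - poincareIter n x‖ ≤ ‖x‖ ^ 2 / 16 * (1 / 2) ^ n := by
  induction n generalizing x with
  | zero =>
    have : poincareIter 1 x - poincareIter 0 x = (0, (x.1 / 4) ^ 2) := by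
      ext <;> simp [poincareIter, henon, contr] <;> ring
    rw [zero_add, this]
    have h1 : ‖x.1‖ ^ 2 ≤ ‖x‖ ^ 2 := by gcongr; exact norm_fst_le x
    refine max_le ?_ ?_
    · simp; positivity
    · simp only [norm_pow, norm_div]; norm_num; linarith
  | succ n ih =>
    have hc : ‖contr x‖ ≤ 1 := by rw [norm_contr]; linarith
    have h := ih (contr x) hc
    have b1 := norm_poincareIter_le (n + 1) (contr x) hc
    have b2 := norm_poincareIter_le n (contr x) hc
    rw [norm_contr] at h b1 b2
    have hx0 := norm_nonneg x
    calc _ ≤ _ := norm_henon_sub_le (poincareIter (n + 1) (contr x)) (poincareIter n (contr x))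
      _ ≤ 8 * ((‖x‖ / 4) ^ 2 / 16 * (1 / 2) ^ n) := by
        gcongr
        nlinarith
      _ = _ := by ring

lemma summable_geom : Summable fun n : ℕ => (1 / 4 : ℝ) * (1 / 2) ^ n :=
  (summable_geometric_of_lt_one (by norm_num) (by norm_num)).mul_left _

lemma tendsto_poincareIter_tsum (x : ℂ × ℂ) (hx : ‖x‖ ≤ 1) :
    Filter.Tendsto (fun n => poincareIter n x) Filter.atTop
      (nhds (x + ∑' n, (poincareIter (n + 1) x - poincareIter n x))) := by
  have hs : Summable fun n => poincareIter (n + 1) x - poincareIter n x :=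
    Summable.of_norm_bounded summable_geom fun n =>
      (norm_poincareIter_succ_sub_le n x hx).trans
        (mul_le_mul_of_nonneg_right (by nlinarith [norm_nonneg x]) (by positivity))
  have := (hs.hasSum.tendsto_sum_nat).const_add x
  refine this.congr fun n => ?_
  rw [Finset.sum_range_sub (fun n => poincareIter n x)]
  simp [poincareIter]

/-- Cauchy's estimate for the differences of consecutive approximations. It makes the limit
holomorphic near `0`, and the sum `1 / 2` of these bounds makes it injective there. -/
lemma norm_fderiv_step_le (n : ℕ) (x : ℂ × ℂ) (hx : x ∈ Metric.ball (0 : ℂ × ℂ) (1 / 2)) :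
    ‖fderiv ℂ (fun y => poincareIter (n + 1) y - poincareIter n y) x‖ ≤ 1 / 4 * (1 / 2) ^ n := by
  have hb : ∀ y ∈ Metric.ball x (1 / 2), ‖poincareIter (n + 1) y - poincareIter n y‖
      ≤ 1 / 16 * (1 / 2) ^ n := by
    intro y hy
    rw [mem_ball_iff_norm] at hy
    rw [mem_ball_zero_iff] at hx
    have hy1 : ‖y‖ ≤ 1 := by linarith [norm_le_norm_sub_add y x]
    refine (norm_poincareIter_succ_sub_le n y hy1).trans ?_
    gcongr
    nlinarith [norm_nonneg y]
  refine (Complex.norm_fderiv_le_div_of_mapsTo_ball (R₁ := 1 / 2) (R₂ := 1 / 8 * (1 / 2) ^ n)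
    ((differentiable_poincareIter _).sub (differentiable_poincareIter _)).differentiableOn
    ?_ (by norm_num)).trans (le_of_eq (by ring))
  intro y hy
  rw [mem_closedBall_iff_norm]
  refine (norm_sub_le _ _).trans ?_
  simp only [Pi.sub_apply]
  linarith [hb y hy, hb x (Metric.mem_ball_self (by norm_num))]

/-- There is an injective holomorphic map `ℂ² → ℂ²` whose image misses the region
`max ‖w‖ 144 ≤ ‖z‖`, namely the Poincaré map of `henon`. Every property is checked near `0` and
spread to all of `ℂ²` by the functional equation `F = henon ∘ F ∘ contr`. -/
lemma exists_fatouBieberbach : ∃ F : ℂ × ℂ → ℂ × ℂ,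
    Differentiable ℂ F ∧ Function.Injective F ∧ ∀ x, ‖(F x).1‖ < max ‖(F x).2‖ 144 := by
  -- Every point enters the ball of radius `1 / 2` under iteration of `contr`; `k` bounds the time.
  have hscale : ∀ x : ℂ × ℂ, ∃ k : ℕ, ‖x‖ < 1 / 2 * 4 ^ k := fun x => by
    obtain ⟨k, hk⟩ := pow_unbounded_of_one_lt (2 * ‖x‖) (show (1 : ℝ) < 4 by norm_num)
    exact ⟨k, by linarith⟩
  have hc : ∀ (k : ℕ) (x : ℂ × ℂ), ‖x‖ < 1 / 2 * 4 ^ (k + 1) → ‖contr x‖ < 1 / 2 * 4 ^ k :=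
    fun k x h => by rw [norm_contr]; rw [pow_succ] at h; linarith
  have hlim : ∀ x, ∃ l, Filter.Tendsto (fun n => poincareIter n x) Filter.atTop (nhds l) := by
    intro x
    obtain ⟨k, hk⟩ := hscale x
    induction k generalizing x with
    | zero => exact ⟨_, tendsto_poincareIter_tsum x (by linarith)⟩
    | succ k ih =>
      obtain ⟨l, hl⟩ := ih _ (hc k x hk)
      exact ⟨henon l, (Filter.tendsto_add_atTop_iff_nat 1).1
        ((differentiable_henon.continuous.tendsto l).comp hl)⟩
  choose F hF using hlim
  have hfun : ∀ x, F x = henon (F (contr x)) := fun x =>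
    tendsto_nhds_unique ((Filter.tendsto_add_atTop_iff_nat 1).2 (hF x))
      ((differentiable_henon.continuous.tendsto _).comp (hF (contr x)))
  let S : ℂ × ℂ → ℂ × ℂ := fun y => ∑' n, (poincareIter (n + 1) y - poincareIter n y)
  have hFS : ∀ x, ‖x‖ < 1 / 2 → F x = x + S x := fun x hx =>
    tendsto_nhds_unique (hF x) (tendsto_poincareIter_tsum x (by linarith))
  have hSd : ∀ x ∈ Metric.ball (0 : ℂ × ℂ) (1 / 2), HasFDerivAt S
      (∑' n, fderiv ℂ (fun y => poincareIter (n + 1) y - poincareIter n y) x) x := by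
    intro x hx
    refine hasFDerivAt_tsum_of_isPreconnected summable_geom Metric.isOpen_ball
      (convex_ball _ _).isPreconnected
      (fun n y _ => (((differentiable_poincareIter _).sub
        (differentiable_poincareIter _)).differentiableAt).hasFDerivAt)
      norm_fderiv_step_le (Metric.mem_ball_self (by norm_num)) ?_ hx
    refine Summable.of_norm_bounded summable_geom fun n =>
      (norm_poincareIter_succ_sub_le n 0 (by simp)).trans ?_
    simp
  have hsum : HasSum (fun n : ℕ => (1 / 4 : ℝ) * (1 / 2) ^ n) (1 / 2) := by
    have := hasSum_geometric_two.mul_left (1 / 4 : ℝ)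
    norm_num at this ⊢
    exact this
  have hSl : ∀ x y : ℂ × ℂ, ‖x‖ < 1 / 2 → ‖y‖ < 1 / 2 → ‖S y - S x‖ ≤ 1 / 2 * ‖y - x‖ := by
    intro x y hx hy
    exact (convex_ball (0 : ℂ × ℂ) (1 / 2)).norm_image_sub_le_of_norm_hasFDerivWithin_le
      (fun z hz => (hSd z hz).hasFDerivWithinAt)
      (fun z hz => tsum_of_norm_bounded hsum fun n => norm_fderiv_step_le n z hz)
      (by simpa using hx) (by simpa using hy)
  refine ⟨F, fun x => ?_, fun x y hxy => ?_, fun x => ?_⟩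
  · obtain ⟨k, hk⟩ := hscale x
    induction k generalizing x with
    | zero =>
      have hx : x ∈ Metric.ball (0 : ℂ × ℂ) (1 / 2) := by simpa using hk
      refine (differentiableAt_id.add (hSd x hx).differentiableAt).congr_of_eventuallyEq ?_
      filter_upwards [Metric.isOpen_ball.mem_nhds hx] with y hy
      exact hFS y (by simpa using hy)
    | succ k ih =>
      rw [show F = henon ∘ F ∘ contr from funext hfun]
      exact (differentiable_henon _).comp x
        ((ih _ (hc k x hk)).comp x (differentiable_contr x))
  · obtain ⟨k, hk, hk'⟩ : ∃ k : ℕ, ‖x‖ < 1 / 2 * 4 ^ k ∧ ‖y‖ < 1 / 2 * 4 ^ k := by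
      obtain ⟨k, hk⟩ := hscale x
      obtain ⟨k', hk'⟩ := hscale y
      refine ⟨max k k', hk.trans_le ?_, hk'.trans_le ?_⟩ <;> gcongr <;> simp
    induction k generalizing x y with
    | zero =>
      have hx : ‖x‖ < 1 / 2 := by simpa using hk
      have hy : ‖y‖ < 1 / 2 := by simpa using hk'
      rw [hFS x hx, hFS y hy] at hxy
      have h := hSl x y hx hy
      have h2 : S y - S x = x - y := by
        rw [sub_eq_sub_iff_add_eq_add, add_comm, ← hxy]
      rw [h2, norm_sub_rev y x] at h
      have : ‖x - y‖ = 0 := by linarith [norm_nonneg (x - y)]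
      exact sub_eq_zero.1 (norm_eq_zero.1 this)
    | succ k ih =>
      rw [hfun x, hfun y] at hxy
      exact contr_injective (ih _ _ (henon_injective hxy) (hc k x hk) (hc k y hk'))
  · obtain ⟨k, hk⟩ := hscale x
    induction k generalizing x with
    | zero =>
      have hx : ‖x‖ < 1 / 2 := by simpa using hk
      have h : ‖F x‖ ≤ ‖x‖ + ‖x‖ ^ 2 :=
        le_of_tendsto (hF x).norm (Filter.Eventually.of_forall fun n =>
          norm_poincareIter_le n x (by linarith))
      have := norm_fst_le (F x)
      refine lt_max_of_lt_right ?_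
      nlinarith [norm_nonneg x]
    | succ k ih =>
      rw [hfun x]
      by_contra! h
      exact absurd (henon_escape _ h) (not_le.2 (ih _ (hc k x hk)))

/-! ### Growth on strips and linear coordinates adapted to the subgroup -/

/-- Simultaneous Dirichlet approximation. -/
lemma exists_mul_near_int {κ : Type*} [Fintype κ] (a : κ → ℝ) {ε : ℝ} (hε : 0 < ε) :
    ∃ N : ℕ, 0 < N ∧ ∀ i, ∃ n : ℤ, |N * a i - n| ≤ ε := by
  obtain ⟨x, -, φ, hφ, hx⟩ := (isCompact_Icc (a := (0 : κ → ℝ)) (b := 1)).tendsto_subseq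
    (x := fun (n : ℕ) i => Int.fract (n * a i))
    (fun n => ⟨fun i => Int.fract_nonneg _, fun i => (Int.fract_lt_one _).le⟩)
  obtain ⟨k, hk⟩ := Metric.cauchySeq_iff'.1 hx.cauchySeq ε hε
  have hlt : φ k < φ (k + 1) := hφ (Nat.lt_succ_self k)
  refine ⟨φ (k + 1) - φ k, by omega, fun i =>
    ⟨⌊φ (k + 1) * a i⌋ - ⌊φ k * a i⌋, ?_⟩⟩
  have h := ((dist_le_pi_dist _ _ i).trans_lt (hk (k + 1) (Nat.le_succ k))).le
  simp only [Function.comp, Real.dist_eq, Int.fract] at h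
  refine le_of_eq_of_le (congrArg abs ?_) h
  rw [Nat.cast_sub hlt.le]
  push_cast
  ring

/-- A zero-free entire function `exp ∘ g` of modulus at least `3 * max ‖t‖ R` on all the strips of width
`1 / 3` around the lines `re t = n`, `n ∈ ℤ`. The function `g` is `t ^ 2 + cos (2 π t)` plus a
constant: on these strips the real part of the cosine is at least `cosh (2 π im t) / 2`, which
outweighs the term `-(im t) ^ 2` in the real part of `t ^ 2`. -/
lemma growth (R : ℝ) : ∃ g : ℂ → ℂ, Differentiable ℂ g ∧
    ∀ t : ℂ, (∃ n : ℤ, |t.re - n| ≤ 1 / 6) → 3 * max ‖t‖ R ≤ Real.exp (g t).re := by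
  set B := Real.log (3 * max R 1) with hB
  have hm : 0 < max R 1 := by positivity
  have hBe : Real.exp B = 3 * max R 1 := by rw [hB, Real.exp_log (by positivity)]
  refine ⟨fun t => t ^ 2 + Complex.cos (2 * Real.pi * t) + B, by fun_prop, ?_⟩
  rintro t ⟨n, hn⟩
  have hcos : (Complex.cos (2 * Real.pi * t)).re
      = Real.cos (2 * Real.pi * t.re) * Real.cosh (2 * Real.pi * t.im) := by
    have h1 : (2 * Real.pi * t : ℂ).re = 2 * Real.pi * t.re := by simp
    have h2 : (2 * Real.pi * t : ℂ).im = 2 * Real.pi * t.im := by simp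
    rw [Complex.cos_eq, h1, h2, ← Complex.ofReal_cos, ← Complex.ofReal_sin,
      ← Complex.ofReal_cosh, ← Complex.ofReal_sinh]
    simp [-Complex.ofReal_cos, -Complex.ofReal_sin, -Complex.ofReal_cosh, -Complex.ofReal_sinh]
  have hc : 1 / 2 ≤ Real.cos (2 * Real.pi * t.re) := by
    have : Real.cos (2 * Real.pi * t.re) = Real.cos |2 * Real.pi * (t.re - n)| := by
      rw [Real.cos_abs, ← Real.cos_sub_int_mul_two_pi _ n]
      congr 1; ring
    rw [this, ← Real.cos_pi_div_three]
    have hpi := Real.pi_pos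
    apply Real.cos_le_cos_of_nonneg_of_le_pi (abs_nonneg _) (by linarith)
    rw [abs_mul, abs_of_pos (by positivity)]
    nlinarith
  have hch : 1 + (2 * Real.pi * t.im) ^ 2 / 2 ≤ Real.cosh (2 * Real.pi * t.im) := by
    set y := 2 * Real.pi * t.im
    have e : Real.cosh y = 1 + 2 * Real.sinh (y / 2) ^ 2 := by
      have h1 := Real.cosh_two_mul (y / 2)
      have h2 := Real.cosh_sq (y / 2)
      rw [show 2 * (y / 2) = y by ring] at h1
      linarith
    have h3 : |y / 2| ≤ |Real.sinh (y / 2)| := by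
      rw [Real.abs_sinh]; exact Real.self_le_sinh_iff.2 (abs_nonneg _)
    have := sq_le_sq.2 h3
    nlinarith
  have hre : ‖t‖ ^ 2 + B ≤ (t ^ 2 + Complex.cos (2 * Real.pi * t) + B).re := by
    rw [Complex.add_re, Complex.add_re, hcos, Complex.sq_norm, Complex.normSq_apply]
    have : (t ^ 2).re = t.re * t.re - t.im * t.im := by rw [sq, Complex.mul_re]
    rw [this, Complex.ofReal_re]
    have hpi := Real.pi_gt_three
    have h9 : 9 ≤ Real.pi ^ 2 := by nlinarith
    have h4 : 1 + 18 * t.im ^ 2 ≤ Real.cosh (2 * Real.pi * t.im) := by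
      nlinarith [sq_nonneg t.im, mul_le_mul_of_nonneg_right h9 (sq_nonneg t.im)]
    nlinarith [sq_nonneg t.im]
  calc 3 * max ‖t‖ R ≤ Real.exp (‖t‖ ^ 2) * Real.exp B := by
        rw [hBe]
        have h1 : 1 + ‖t‖ ^ 2 ≤ Real.exp (‖t‖ ^ 2) := by linarith [Real.add_one_le_exp (‖t‖ ^ 2)]
        have h2 : 1 ≤ max R 1 := le_max_right _ _
        have h3 : R ≤ max R 1 := le_max_left _ _
        rcases max_cases ‖t‖ R with ⟨h, _⟩ | ⟨h, _⟩ <;> rw [h]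
        · nlinarith [sq_nonneg (‖t‖ - 1)]
        · nlinarith [sq_nonneg ‖t‖]
    _ = Real.exp (‖t‖ ^ 2 + B) := (Real.exp_add _ _).symm
    _ ≤ _ := Real.exp_le_exp.2 hre

/-- A discrete subgroup has integral coordinates in a suitable real basis: a `ℤ`-basis of it is
linearly independent over `ℝ`, and any completion to a basis will do. -/
lemma exists_basis_repr_int {E : Type*} [NormedAddCommGroup E] [NormedSpace ℝ E]
    [FiniteDimensional ℝ E] (Λ : AddSubgroup E) (hΛ : DiscreteTopology Λ) :
    ∃ (κ : Type) (_ : Fintype κ) (B : Module.Basis κ ℝ E),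
      ∀ x ∈ Λ, ∀ k, ∃ n : ℤ, B.repr x k = n := by
  classical
  let L : Submodule ℤ E := AddSubgroup.toIntSubmodule Λ
  have hL : DiscreteTopology L := hΛ
  let b := Module.Free.chooseBasis ℤ L
  let v : Module.Free.ChooseBasisIndex ℤ L → E := fun i => b i
  have hspan : Submodule.span ℤ (Set.range v) = L := by
    have := congrArg (Submodule.map L.subtype) b.span_eq
    rw [Submodule.map_span, ← Set.range_comp] at this
    simpa [v, Function.comp_def] using this
  have hli : LinearIndependent ℝ v := by
    rw [linearIndependent_iff_card_eq_finrank_span,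
      Real.finrank_eq_int_finrank_of_discrete (by rw [hspan]; exact hL), Set.finrank, hspan]
    exact (Module.finrank_eq_card_chooseBasisIndex ℤ L).symm
  have hs := hli.linearIndepOn_id
  let B₀ := Module.Basis.extend hs
  have hfin : Finite (hs.extend (Set.subset_univ _)) := Module.Finite.finite_basis B₀
  let e := Finite.equivFin (hs.extend (Set.subset_univ _))
  refine ⟨Fin _, inferInstance, B₀.reindex e, ?_⟩
  intro x hx k
  have hx' : x ∈ Submodule.span ℤ (Set.range v) := by rw [hspan]; exact hx
  induction hx' using Submodule.span_induction with
  | mem y hy =>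
    have hy' : B₀ ⟨y, Module.Basis.subset_extend hs hy⟩ = y := Module.Basis.extend_apply_self hs _
    rw [← hy', Module.Basis.repr_reindex_apply, Module.Basis.repr_self, Finsupp.single_apply]
    split_ifs
    · exact ⟨1, by simp⟩
    · exact ⟨0, by simp⟩
  | zero => exact ⟨0, by rw [map_zero, Int.cast_zero]; rfl⟩
  | add y z hy hz h1 h2 =>
    rw [hspan] at hy hz
    obtain ⟨n, hn⟩ := h1 hy
    obtain ⟨n', hn'⟩ := h2 hz
    exact ⟨n + n', by rw [map_add, Finsupp.add_apply, hn, hn']; push_cast; rfl⟩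
  | smul a y hy h =>
    rw [hspan] at hy
    obtain ⟨n, hn⟩ := h hy
    exact ⟨a * n, by rw [map_zsmul, Finsupp.smul_apply, hn]; simp⟩

/-- Complex linear coordinates on `ℂ²` for which all points of the translates of `Λ` have both real
parts within `1 / 6` of an integer. -/
lemma exists_coordinates (Λ : AddSubgroup (ℂ × ℂ)) (hΛ : DiscreteTopology Λ)
    (m : ℕ) (p : Fin m → ℂ × ℂ) :
    ∃ M : (ℂ × ℂ) ≃ₗ[ℂ] (ℂ × ℂ), ∀ v ∈ Λ, ∀ j,
      (∃ n : ℤ, |(M (v + p j)).1.re - n| ≤ 1 / 6) ∧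
      (∃ n : ℤ, |(M (v + p j)).2.re - n| ≤ 1 / 6) := by
  obtain ⟨κ, _, B, hB⟩ := exists_basis_repr_int Λ hΛ
  obtain ⟨N, hN, hNa⟩ := exists_mul_near_int
    (fun q : κ × Fin m => B.repr (p q.2) q.1) (show (0 : ℝ) < 1 / 6 by norm_num)
  -- The complex linear forms whose real parts are `N` times the real coordinates.
  let l : κ → (ℂ × ℂ) →ₗ[ℂ] ℂ := fun k => (Module.Dual.extendRCLike ((N : ℝ) • B.coord k) : (ℂ × ℂ) →ₗ[ℂ] ℂ)
  have hre : ∀ k v, (l k v).re = N * B.repr v k := fun k v => by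
    exact (Module.Dual.re_extendRCLike_apply (𝕜 := ℂ) ((N : ℝ) • B.coord k) v).trans (by simp)
  have hnear : ∀ v ∈ Λ, ∀ j k, ∃ n : ℤ, |(l k (v + p j)).re - n| ≤ 1 / 6 := by
    intro v hv j k
    obtain ⟨n, hn⟩ := hB v hv k
    obtain ⟨n', hn'⟩ := hNa (k, j)
    refine ⟨N * n + n', ?_⟩
    rw [hre, map_add, Finsupp.add_apply, hn]
    push_cast
    convert hn' using 2
    ring
  have hsep : ∀ v : ℂ × ℂ, v ≠ 0 → ∃ k, l k v ≠ 0 := by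
    intro v hv
    by_contra! h
    apply hv
    apply B.repr.injective
    ext k
    have := hre k v
    rw [h k] at this
    have hN' : (N : ℝ) ≠ 0 := by positivity
    simpa [hN'] using this.symm
  obtain ⟨i, hi⟩ := hsep (1, 0) (by simp)
  have hform : ∀ k (v : ℂ × ℂ), l k v = l k (1, 0) * v.1 + l k (0, 1) * v.2 := by
    intro k v
    have : v = v.1 • ((1 : ℂ), (0 : ℂ)) + v.2 • ((0 : ℂ), (1 : ℂ)) := by ext <;> simp
    conv_lhs => rw [this]
    rw [map_add, map_smul, map_smul, smul_eq_mul, smul_eq_mul]; ring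
  -- The vector below spans the kernel of `l i`, so `l i` and `l j` have no common zero but `0`.
  obtain ⟨j, hj⟩ := hsep (l i (0, 1), -l i (1, 0)) (by simp [hi])
  have hinj : Function.Injective ((l i).prod (l j)) := by
    rw [← LinearMap.ker_eq_bot, LinearMap.ker_eq_bot']
    rintro ⟨z, w⟩ h
    have h1 : l i (z, w) = 0 := congrArg Prod.fst h
    have h2 : l j (z, w) = 0 := congrArg Prod.snd h
    rw [hform] at h1 h2 hj
    simp only at h1 h2 hj
    have hw : w = 0 := by
      apply (mul_eq_zero.1 (?_ : (l j (1, 0) * l i (0, 1) + l j (0, 1) * -l i (1, 0)) * w = 0)).resolve_left hj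
      linear_combination l j (1, 0) * h1 - l i (1, 0) * h2
    subst hw
    simp [hi] at h1
    simp [h1]
  exact ⟨LinearEquiv.ofInjectiveEndo _ hinj, fun v hv q => ⟨hnear v hv q i, hnear v hv q j⟩⟩

/-! ### Avoiding the translates -/

/-- there is an injective holomorphic map F : ℂ² → ℂ² whose image
is disjoint from Λ₀ = ⋃ⱼ (Λ + pⱼ). -/
theorem stmt3 (Λ : AddSubgroup (ℂ × ℂ)) (hΛ : DiscreteTopology Λ)
    (m : ℕ) (p : Fin m → ℂ × ℂ) :
    ∃ F : ℂ × ℂ → ℂ × ℂ,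
      Differentiable ℂ F ∧ Function.Injective F ∧
      ∀ x : ℂ × ℂ, F x ∉ ⋃ j, (fun v => v + p j) '' (Λ : Set (ℂ × ℂ)) := by
  obtain ⟨M, hM⟩ := exists_coordinates Λ hΛ m p
  obtain ⟨g, hg, hgR⟩ := growth 144
  obtain ⟨F, hF, hinj, hmiss⟩ := exists_fatouBieberbach
  have hMd : Differentiable ℂ M.symm :=
    M.symm.toContinuousLinearEquiv.differentiable
  refine ⟨fun x => M.symm (Complex.exp (-g (F x).2) * (F x).1 - 1 / 2, (F x).2),
    ?_, ?_, ?_⟩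
  · have h1 : Differentiable ℂ fun x => (F x).1 := hF.fst
    have h2 : Differentiable ℂ fun x => (F x).2 := hF.snd
    exact hMd.comp (((((hg.comp h2).neg.cexp).mul h1).sub_const _).prodMk h2)
  · intro x y hxy
    have h := M.symm.injective hxy
    simp only [Prod.mk.injEq] at h
    obtain ⟨h1, h2⟩ := h
    rw [h2] at h1
    exact hinj (Prod.ext (mul_left_cancel₀ (Complex.exp_ne_zero _) (sub_left_injective h1)) h2)
  · intro x hx
    obtain ⟨j, v, hv, hvx⟩ := Set.mem_iUnion.1 hx
    have hMx : M (v + p j) = (Complex.exp (-g (F x).2) * (F x).1 - 1 / 2, (F x).2) := by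
      rw [show v + p j = _ from hvx, LinearEquiv.apply_symm_apply]
    obtain ⟨⟨n, hn⟩, hn'⟩ := hM v hv j
    rw [hMx] at hn hn'
    have hgrow := hgR _ hn'
    set s := Complex.exp (-g (F x).2) * (F x).1 with hs
    -- `s - 1 / 2` has real part close to an integer, so `s` stays away from `0`.
    have hs3 : 1 / 3 ≤ ‖s‖ := by
      refine le_trans ?_ (Complex.abs_re_le_norm s)
      have hre : (s - 1 / 2).re = s.re - 1 / 2 := by simp
      simp only [hre] at hn
      rw [abs_le] at hn
      rcases le_or_gt 0 n with h | h
      · have : (0 : ℝ) ≤ n := by exact_mod_cast h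
        exact le_trans (by linarith [hn.1]) (le_abs_self _)
      · have : (n : ℝ) ≤ -1 := by exact_mod_cast Int.le_sub_one_of_lt h
        exact le_trans (by linarith [hn.2]) (neg_le_abs _)
    have hF1 : ‖(F x).1‖ = Real.exp (g (F x).2).re * ‖s‖ := by
      rw [← Complex.norm_exp, ← norm_mul, hs, ← mul_assoc, ← Complex.exp_add]
      simp
    have := hmiss x
    rw [hF1] at this
    nlinarith [Real.exp_pos (g (F x).2).re]
end

section
/- Let f, g : ℂ → ℂ be entire functions with no common zeros and with g not identically zero, so that s = f/g is a meromorphic function on ℂ whose poles are exactly the zeros of g. Then there exists a holomorphic map Φ : ℂ² → ℂ² satisfying π¹ ∘ Φ = π¹ (Φ is fiber-preserving) whose image is exactly the set {(z, w) ∈ ℂ² : w·g(z) ≠ f(z)} (the complement of the graph of s); in particular Φ maps ℂ² onto this complement. -/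
/-!
The theorem reduces to finding an entire `k` such that `E = g * k - f` has no zeros. Given `k`, put
`Φ (z, ζ) = (z, k z + E z * (exp (g z * ζ) - 1) / g z)`,
where the quotient is `ζ * dslope exp 0 (g z * ζ)` and hence entire in `(z, ζ)`. If `w` is the
second coordinate, then `w * g z - f z = E z * exp (g z * ζ)`. So the graph is avoided. When
`g z ≠ 0` every nonzero value of `w * g z - f z` is attained. When `g z = 0` the fibre map is affine
in `ζ` with slope `E z ≠ 0`, hence onto `ℂ`.

To find `k` (`exists_entire_unit_mod`), note that `f` is nonzero at every zero of `g`, so `-f` has a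
logarithm near each of them. Mittag-Leffler's theorem (`mittagLeffler`) gives `S`, analytic off the
zeros of `g`, with the same principal parts as `log (-f) / g` there. Then `exp (g * S) + f` is
divisible by `g`, and the quotient extends to the required entire function `k`.
-/

open Complex Filter Topology Set

/-! ### Taylor quotients -/

theorem analyticAt_dslope {h : ℂ → ℂ} {a : ℂ} (hh : AnalyticAt ℂ h a) :
    AnalyticAt ℂ (dslope h a) a := by
  obtain ⟨p, hp⟩ := hh
  exact ⟨_, hp.has_fpower_series_dslope_fslope⟩

/-- Taylor expansion at `a` to order `m`, with analytic remainder; `q` is the Taylor polynomial,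
of which only entireness is recorded. -/
theorem exists_taylor_quotient {φ : ℂ → ℂ} {a : ℂ} (hφ : AnalyticAt ℂ φ a) (m : ℕ) :
    ∃ q ψ : ℂ → ℂ, Differentiable ℂ q ∧ AnalyticAt ℂ ψ a ∧
      ∀ z, φ z = q z + (z - a) ^ m * ψ z := by
  induction m with
  | zero => exact ⟨fun _ ↦ 0, φ, by fun_prop, hφ, by simp⟩
  | succ m ih =>
    obtain ⟨q, ψ, hq, hψ, h⟩ := ih
    refine ⟨fun z ↦ q z + (z - a) ^ m * ψ a, dslope ψ a, by fun_prop, analyticAt_dslope hψ,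
      fun z ↦ ?_⟩
    have := sub_smul_dslope ψ a z
    rw [smul_eq_mul] at this
    rw [h z]
    linear_combination -(z - a) ^ m * this

/-! ### Prescribed principal parts -/

/-- The building block of the Mittag-Leffler series. Multiplying `q z / (z - a) ^ m` by
`1 - (1 - (z / a) ^ N) ^ m`, which is `1` to order `m` at `a`, changes it only by a function
analytic at `a`; on the disc of radius `‖a‖ / 2` this factor tends uniformly to `0` as `N` grows.
For `a = 0` the bound is vacuous. -/
theorem exists_small_with_principal_part {q : ℂ → ℂ} (hq : Differentiable ℂ q) (a : ℂ) (m : ℕ)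
    {ε : ℝ} (hε : 0 < ε) :
    ∃ M : ℂ → ℂ, (∀ z, z ≠ a → AnalyticAt ℂ M z) ∧
      (∃ A : ℂ → ℂ, AnalyticAt ℂ A a ∧ ∀ᶠ z in 𝓝[≠] a, M z = q z / (z - a) ^ m + A z) ∧
      ∀ z, 2 * ‖z‖ < ‖a‖ → ‖M z‖ ≤ ε := by
  rcases eq_or_ne a 0 with rfl | ha
  · refine ⟨fun z ↦ q z / (z - 0) ^ m, fun z hz ↦ ?_, ⟨fun _ ↦ 0, by fun_prop, by simp⟩, ?_⟩
    · exact (hq.analyticAt z).div (by fun_prop) (pow_ne_zero _ (sub_ne_zero.2 hz))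
    · intro z hz
      rw [norm_zero] at hz
      linarith [norm_nonneg z]
  have hana : ∀ z, z ≠ a → AnalyticAt ℂ (fun z ↦ q z / (z - a) ^ m) z := fun z hz ↦
    (hq.analyticAt z).div (by fun_prop) (pow_ne_zero _ (sub_ne_zero.2 hz))
  have ha' : 0 < ‖a‖ := norm_pos_iff.2 ha
  obtain ⟨C, hC⟩ := (isCompact_closedBall (0 : ℂ) (‖a‖ / 2)).exists_bound_of_continuousOn
    (f := fun z ↦ q z / (z - a) ^ m) (fun z hz ↦ by
      refine (hana z ?_).continuousAt.continuousWithinAt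
      rintro rfl
      rw [mem_closedBall_zero_iff] at hz
      linarith)
  have hC0 : 0 ≤ C := (norm_nonneg _).trans (hC 0 (Metric.mem_closedBall_self (by positivity)))
  have hlim : Tendsto (fun t : ℂ ↦ 1 - (1 - t) ^ m) (𝓝 0) (𝓝 0) := by
    have : ContinuousAt (fun t : ℂ ↦ 1 - (1 - t) ^ m) 0 := by fun_prop
    simpa [ContinuousAt] using this
  obtain ⟨δ, hδ, hδε⟩ := Metric.tendsto_nhds_nhds.1 hlim (ε / (C + 1)) (by positivity)
  obtain ⟨N, hN⟩ := exists_pow_lt_of_lt_one hδ (by norm_num : (1 / 2 : ℝ) < 1)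
  refine ⟨fun z ↦ q z / (z - a) ^ m * (1 - (1 - (z / a) ^ N) ^ m), fun z hz ↦ ?_,
    ⟨fun z ↦ -(q z * dslope (fun z ↦ 1 - (z / a) ^ N) a z ^ m), ?_, ?_⟩,
    fun z hz ↦ ?_⟩
  · exact (hana z hz).mul (by fun_prop)
  · have h1 : AnalyticAt ℂ (dslope (fun z ↦ 1 - (z / a) ^ N) a) a :=
      analyticAt_dslope (by fun_prop)
    have h2 := hq.analyticAt a
    fun_prop
  · filter_upwards [self_mem_nhdsWithin] with z hz
    have h1 := sub_smul_dslope (fun z ↦ 1 - (z / a) ^ N) a z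
    simp only [smul_eq_mul, div_self ha, one_pow, sub_self, sub_zero] at h1
    have hz' : z - a ≠ 0 := sub_ne_zero.2 hz
    have h3 : (z - a) ^ m ≠ 0 := pow_ne_zero _ hz'
    rw [← h1, mul_pow]
    field_simp
    ring
  · have h1 : ‖(z / a) ^ N‖ < δ := by
      refine lt_of_le_of_lt ?_ hN
      rw [norm_pow, norm_div]
      refine pow_le_pow_left₀ (by positivity) ?_ N
      rw [div_le_div_iff₀ ha' two_pos]
      linarith
    have h2 := hδε (x := (z / a) ^ N) (by simpa using h1)
    rw [dist_zero_right] at h2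
    have h3 := hC z (by rw [mem_closedBall_zero_iff]; linarith)
    rw [norm_mul]
    calc _ ≤ (C + 1) * (ε / (C + 1)) := by gcongr; linarith
      _ = ε := by field_simp

/-- **Mittag-Leffler's theorem**: on a closed discrete set `Z`, principal parts
`q a z / (z - a) ^ m a` can be prescribed simultaneously. The value of `S` at the points of `Z`
carries no information. -/
theorem mittagLeffler {Z : Set ℂ} (hZ : ∀ R : ℝ, (Z ∩ Metric.closedBall 0 R).Finite)
    (q : ℂ → ℂ → ℂ) (hq : ∀ a, Differentiable ℂ (q a)) (m : ℂ → ℕ) :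
    ∃ S : ℂ → ℂ, (∀ z, z ∉ Z → AnalyticAt ℂ S z) ∧
      ∀ a ∈ Z, ∃ A : ℂ → ℂ, AnalyticAt ℂ A a ∧
        ∀ᶠ z in 𝓝[≠] a, S z = q a z / (z - a) ^ m a + A z := by
  classical
  have hcount : Z.Countable := by
    have : Z = ⋃ n : ℕ, Z ∩ Metric.closedBall 0 n := by
      rw [← inter_iUnion, Metric.iUnion_closedBall_nat, inter_univ]
    rw [this]
    exact countable_iUnion fun n ↦ (hZ n).countable
  have := hcount.to_subtype
  obtain ⟨ε, hε, c, hsum, -⟩ := NNReal.exists_pos_sum_of_countable one_ne_zero Z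
  choose M hM1 hM2 hM3 using fun a : Z ↦
    exists_small_with_principal_part (hq a) a (m a) (NNReal.coe_pos.2 (hε a))
  have hε' : Summable fun a : Z ↦ (ε a : ℝ) := NNReal.summable_coe.2 hsum.summable
  -- Near `z₀` only the finitely many terms with `‖a‖ ≤ 2 (‖z₀‖ + 1)` can be large.
  have key : ∀ z₀ : ℂ, ∃ (F : Finset Z) (T : ℂ → ℂ), AnalyticAt ℂ T z₀ ∧
      (∀ a : Z, (a : ℂ) = z₀ → a ∈ F) ∧
      ∀ᶠ z in 𝓝 z₀, ∑' a, M a z = ∑ a ∈ F, M a z + T z := by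
    intro z₀
    set R : ℝ := ‖z₀‖ + 1
    have hfin : {a : Z | ‖(a : ℂ)‖ ≤ 2 * R}.Finite := by
      refine ((hZ (2 * R)).preimage (f := Subtype.val) Subtype.val_injective.injOn).subset ?_
      intro a ha
      exact ⟨a.2, by simpa using ha⟩
    set F := hfin.toFinset
    have hbd : ∀ (a : {a : Z // a ∉ F}) (z : ℂ), z ∈ Metric.ball (0 : ℂ) R →
        ‖M a z‖ ≤ ε a := by
      intro a z hz
      refine hM3 a z ?_
      have ha : ¬ ‖((a : Z) : ℂ)‖ ≤ 2 * R := by simpa [F] using a.2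
      rw [mem_ball_zero_iff] at hz
      linarith
    have hs : Summable fun a : {a : Z // a ∉ F} ↦ (ε a : ℝ) := hε'.subtype _
    have hz₀ : z₀ ∈ Metric.ball (0 : ℂ) R := by simp [R]
    refine ⟨F, fun z ↦ ∑' a : {a : Z // a ∉ F}, M a z, ?_, ?_, ?_⟩
    · refine (Complex.differentiableOn_tsum_of_summable_norm hs ?_ Metric.isOpen_ball
        hbd).analyticAt (Metric.isOpen_ball.mem_nhds hz₀)
      intro a z hz
      refine (hM1 a z ?_).differentiableAt.differentiableWithinAt
      rintro rfl
      have ha : ¬ ‖((a : Z) : ℂ)‖ ≤ 2 * R := by simpa [F] using a.2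
      rw [mem_ball_zero_iff] at hz
      linarith [norm_nonneg ((a : Z) : ℂ)]
    · rintro a rfl
      simp only [F, Finite.mem_toFinset, mem_ofPred_eq, R]
      linarith [norm_nonneg (a : ℂ)]
    · filter_upwards [Metric.isOpen_ball.mem_nhds hz₀] with z hz
      have h1 : Summable fun a : {a : Z // a ∉ F} ↦ M a z :=
        Summable.of_norm_bounded hs fun a ↦ hbd a z hz
      exact ((F.summable_compl_iff (f := fun a ↦ M a z)).1 h1).sum_add_tsum_subtype_compl F |>.symm
  refine ⟨fun z ↦ ∑' a, M a z, fun z hz ↦ ?_, fun a ha ↦ ?_⟩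
  · obtain ⟨F, T, hT, -, h⟩ := key z
    refine AnalyticAt.congr (f := fun z ↦ ∑ a ∈ F, M a z + T z) ?_ (h.mono fun _ h ↦ h.symm)
    refine (Finset.analyticAt_fun_sum F fun a _ ↦ hM1 a z ?_).add hT
    rintro rfl
    exact hz a.2
  · obtain ⟨F, T, hT, hF, h⟩ := key a
    obtain ⟨A, hA, hMA⟩ := hM2 ⟨a, ha⟩
    refine ⟨fun z ↦ A z + ∑ b ∈ F.erase ⟨a, ha⟩, M b z + T z, ?_, ?_⟩
    · refine (hA.add (Finset.analyticAt_fun_sum _ fun b hb ↦ hM1 b a ?_)).add hT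
      rintro rfl
      simp at hb
    · filter_upwards [hMA, h.filter_mono nhdsWithin_le_nhds] with z h1 h2
      rw [h2, ← Finset.add_sum_erase F _ (hF ⟨a, ha⟩ rfl), h1]
      ring

/-! ### Removable singularities, zeros and logarithms -/

/-- Removal of singularities, for all points at once: the extension takes at each point the
punctured limit of `u`. -/
theorem exists_entire_extension {u : ℂ → ℂ}
    (hu : ∀ a, ∃ c : ℂ → ℂ, AnalyticAt ℂ c a ∧ u =ᶠ[𝓝[≠] a] c) :
    ∃ k : ℂ → ℂ, Differentiable ℂ k ∧ ∀ a, u =ᶠ[𝓝[≠] a] k := by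
  have key : ∀ a, ∃ c : ℂ → ℂ, AnalyticAt ℂ c a ∧ u =ᶠ[𝓝[≠] a] c ∧
      (fun z ↦ limUnder (𝓝[≠] z) u) =ᶠ[𝓝 a] c := by
    intro a
    obtain ⟨c, hc, huc⟩ := hu a
    refine ⟨c, hc, huc, ?_⟩
    have h1 : ∀ᶠ z in 𝓝 a, u =ᶠ[𝓝[≠] z] c := by
      have := eventually_nhdsWithin_iff.1 huc
      filter_upwards [eventually_eventually_nhds.2 this] with z hz
      by_cases hza : z = a
      · rwa [hza]
      · have h2 : ∀ᶠ y in 𝓝 z, y ≠ a := isOpen_ne.mem_nhds hza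
        exact (hz.and h2).filter_mono nhdsWithin_le_nhds |>.mono fun y hy ↦ hy.1 hy.2
    filter_upwards [h1, hc.eventually_analyticAt] with z hz hcz
    exact Tendsto.limUnder_eq
      ((hcz.continuousAt.tendsto.mono_left nhdsWithin_le_nhds).congr' hz.symm)
  refine ⟨fun z ↦ limUnder (𝓝[≠] z) u, fun a ↦ ?_, fun a ↦ ?_⟩
  · obtain ⟨c, hc, -, h⟩ := key a
    exact (hc.congr h.symm).differentiableAt
  · obtain ⟨c, -, h1, h2⟩ := key a
    exact h1.trans (h2.filter_mono nhdsWithin_le_nhds).symm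

theorem finite_zeros_inter_closedBall {g : ℂ → ℂ} (hg : Differentiable ℂ g)
    (hg0 : ∃ z : ℂ, g z ≠ 0) (R : ℝ) : ({z | g z = 0} ∩ Metric.closedBall 0 R).Finite := by
  by_contra hinf
  obtain ⟨x, -, hx⟩ := Set.Infinite.exists_accPt_of_subset_isCompact hinf
    (isCompact_closedBall (0 : ℂ) R) inter_subset_right
  obtain ⟨z, hz⟩ := hg0
  have h := AnalyticOnNhd.eqOn_zero_of_preconnected_of_frequently_eq_zero
    (fun w _ ↦ hg.analyticAt w) isPreconnected_univ (mem_univ x)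
    ((accPt_iff_frequently_nhdsNE.1 hx).mono fun _ h ↦ h.1)
  exact hz (h (mem_univ z))

theorem exists_local_log {h : ℂ → ℂ} {a : ℂ} (hh : AnalyticAt ℂ h a) (ha : h a ≠ 0) :
    ∃ L : ℂ → ℂ, AnalyticAt ℂ L a ∧ ∀ᶠ z in 𝓝 a, exp (L z) = h z := by
  refine ⟨fun z ↦ log (h z / h a) + log (h a), ?_, ?_⟩
  · exact ((hh.div analyticAt_const ha).clog (by simp [ha])).add analyticAt_const
  · filter_upwards [hh.continuousAt.eventually_ne ha] with z hz
    rw [exp_add, exp_log (div_ne_zero hz ha), exp_log ha, div_mul_cancel₀ _ ha]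

/-- `dslope exp 0` is the entire function `(exp t - 1) / t`, with value `1` at `t = 0`. -/
theorem expQuot_spec (t : ℂ) : t * dslope exp 0 t = exp t - 1 := by
  simpa using sub_smul_dslope exp 0 t

theorem differentiable_expQuot : Differentiable ℂ (dslope exp 0) := by
  rw [← differentiableOn_univ, Complex.differentiableOn_dslope univ_mem]
  exact differentiable_exp.differentiableOn

/-! ### Zero-free functions congruent to `-f` modulo `g` -/

/-- If `L` is a local logarithm of `-f` at `a`, then `L / g` has a principal part
`q z / (z - a) ^ m` and an analytic remainder `ψ`. -/
theorem exists_local_unit_data {f g : ℂ → ℂ} (hf : Differentiable ℂ f) (hg : Differentiable ℂ g)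
    (hg0 : ∃ z : ℂ, g z ≠ 0) {a : ℂ} (ha : f a ≠ 0) :
    ∃ (q : ℂ → ℂ) (m : ℕ) (ψ : ℂ → ℂ), Differentiable ℂ q ∧ AnalyticAt ℂ ψ a ∧
      ∀ᶠ z in 𝓝[≠] a, g z ≠ 0 ∧ exp (g z * (q z / (z - a) ^ m + ψ z)) = -f z := by
  obtain ⟨L, hL, hLf⟩ := exists_local_log (h := fun z ↦ -f z) (hf.analyticAt a).neg
    (neg_ne_zero.2 ha)
  have hne : ¬ ∀ᶠ z in 𝓝 a, g z = 0 := by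
    intro h
    obtain ⟨z, hz⟩ := hg0
    exact hz (AnalyticOnNhd.eqOn_zero_of_preconnected_of_eventuallyEq_zero
      (fun w _ ↦ hg.analyticAt w) isPreconnected_univ (mem_univ a) h (mem_univ z))
  obtain ⟨m, G, hG, hGa, hgG⟩ :=
    (hg.analyticAt a).exists_eventuallyEq_pow_smul_nonzero_iff.2 hne
  obtain ⟨q, ψ, hq, hψ, h⟩ := exists_taylor_quotient (hL.div hG hGa) m
  refine ⟨q, m, ψ, hq, hψ, ?_⟩
  filter_upwards [hLf.filter_mono nhdsWithin_le_nhds, hgG.filter_mono nhdsWithin_le_nhds,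
    (hG.continuousAt.eventually_ne hGa).filter_mono nhdsWithin_le_nhds,
    self_mem_nhdsWithin] with z h1 h2 h3 h4
  have h5 : (z - a) ^ m ≠ 0 := pow_ne_zero _ (sub_ne_zero.2 h4)
  rw [smul_eq_mul] at h2
  refine ⟨by rw [h2]; exact mul_ne_zero h5 h3, ?_⟩
  rw [← h1, h2]
  congr 1
  have h6 := h z
  rw [Pi.div_apply, div_eq_iff h3] at h6
  rw [h6]
  field_simp

/-- The class of `f` modulo `g` contains a zero-free entire function, up to sign: some
`g * k - f` has no zeros. It is `exp (g * S)` for a function `S` with the principal parts of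
`log (-f) / g` at the zeros of `g`. Near such a zero `g * S = log (-f) + g * B` with `B` analytic,
so `exp (g * S) + f = -f * (exp (g * B) - 1)` is divisible by `g`. -/
theorem exists_entire_unit_mod {f g : ℂ → ℂ} (hf : Differentiable ℂ f) (hg : Differentiable ℂ g)
    (hfg : ∀ z : ℂ, ¬(f z = 0 ∧ g z = 0)) (hg0 : ∃ z : ℂ, g z ≠ 0) :
    ∃ k : ℂ → ℂ, Differentiable ℂ k ∧ ∀ z, g z * k z - f z ≠ 0 := by
  -- Choice is made at every point; away from the zeros of `g` the data are irrelevant.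
  have hloc : ∀ a : ℂ, ∃ (q : ℂ → ℂ) (m : ℕ) (ψ : ℂ → ℂ), Differentiable ℂ q ∧
      (g a = 0 → AnalyticAt ℂ ψ a ∧
        ∀ᶠ z in 𝓝[≠] a, g z ≠ 0 ∧ exp (g z * (q z / (z - a) ^ m + ψ z)) = -f z) := by
    intro a
    by_cases ha : f a = 0
    · exact ⟨fun _ ↦ 0, 0, fun _ ↦ 0, by fun_prop, fun h ↦ (hfg a ⟨ha, h⟩).elim⟩
    · obtain ⟨q, m, ψ, hq, hψ, h⟩ := exists_local_unit_data hf hg hg0 ha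
      exact ⟨q, m, ψ, hq, fun _ ↦ ⟨hψ, h⟩⟩
  choose q m ψ hq hψ using hloc
  obtain ⟨S, hS, hS'⟩ := mittagLeffler (finite_zeros_inter_closedBall hg hg0) q hq m
  have hu : ∀ z, g z ≠ 0 → AnalyticAt ℂ (fun z ↦ (exp (g z * S z) + f z) / g z) z := by
    intro z hz
    have h1 := hg.analyticAt z
    have h2 := hf.analyticAt z
    exact ((h1.mul (hS z hz)).cexp.add h2).div h1 hz
  obtain ⟨k, hk, huk⟩ := exists_entire_extension (u := fun z ↦ (exp (g z * S z) + f z) / g z) (by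
    intro a
    by_cases ha : g a = 0
    · obtain ⟨hψa, hE⟩ := hψ a ha
      obtain ⟨A, hA, hSA⟩ := hS' a ha
      -- Here `B = A - ψ a`.
      refine ⟨fun z ↦ -f z * (A z - ψ a z) * dslope exp 0 (g z * (A z - ψ a z)), ?_, ?_⟩
      · have h1 := hg.analyticAt a
        have h2 := hf.analyticAt a
        have h3 : AnalyticAt ℂ (fun z ↦ A z - ψ a z) a := hA.sub hψa
        exact (h2.neg.mul h3).mul
          ((differentiable_expQuot.analyticAt _).comp (h1.mul h3))
      · filter_upwards [hE, hSA] with z ⟨h1, h2⟩ h3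
        have h4 : g z * S z = g z * (q a z / (z - a) ^ m a + ψ a z) + g z * (A z - ψ a z) := by
          rw [h3]; ring
        have h5 := expQuot_spec (g z * (A z - ψ a z))
        rw [h4, exp_add, h2, div_eq_iff h1]
        linear_combination f z * h5
    · exact ⟨_, hu a ha, EventuallyEq.rfl⟩)
  refine ⟨k, hk, fun z ↦ ?_⟩
  by_cases hz : g z = 0
  · rw [hz, zero_mul, zero_sub]
    exact neg_ne_zero.2 fun h ↦ hfg z ⟨h, hz⟩
  · have h1 : (exp (g z * S z) + f z) / g z = k z :=
      tendsto_nhds_unique_of_eventuallyEq ((hu z hz).continuousAt.tendsto.mono_left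
        nhdsWithin_le_nhds) (hk.continuous.continuousAt.tendsto.mono_left nhdsWithin_le_nhds)
        (huk z)
    rw [← h1, mul_div_cancel₀ _ hz, add_sub_cancel_right]
    exact exp_ne_zero _

/-! ### The fibre-preserving map -/

/-- for entire f, g with no common zeros and g not identically zero
(so s = f/g is meromorphic with poles exactly the zeros of g), there is a
fiber-preserving holomorphic Φ : ℂ² → ℂ² whose image is exactly the complement
of the graph of s, i.e. {(z,w) : w·g(z) ≠ f(z)}. -/
theorem stmt8 (f g : ℂ → ℂ) (hf : Differentiable ℂ f) (hg : Differentiable ℂ g)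
    (hfg : ∀ z : ℂ, ¬(f z = 0 ∧ g z = 0)) (hg0 : ∃ z : ℂ, g z ≠ 0) :
    ∃ Φ : ℂ × ℂ → ℂ × ℂ,
      Differentiable ℂ Φ ∧
      (∀ x : ℂ × ℂ, (Φ x).1 = x.1) ∧
      Set.range Φ = {w : ℂ × ℂ | w.2 * g w.1 ≠ f w.1} := by
  obtain ⟨k, hk, hE⟩ := exists_entire_unit_mod hf hg hfg hg0
  have hd := differentiable_expQuot
  -- Clearing denominators, `w * g z - f z = E z * exp (g z * ζ)` with `E = g * k - f` zero-free.
  have hid : ∀ z ζ : ℂ,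
      (k z + (g z * k z - f z) * (ζ * dslope exp 0 (g z * ζ))) * g z - f z =
        (g z * k z - f z) * exp (g z * ζ) := by
    intro z ζ
    linear_combination (g z * k z - f z) * expQuot_spec (g z * ζ)
  refine ⟨fun x ↦ (x.1, k x.1 + (g x.1 * k x.1 - f x.1) * (x.2 * dslope exp 0 (g x.1 * x.2))),
    by fun_prop, fun _ ↦ rfl, Subset.antisymm ?_ ?_⟩
  · rintro _ ⟨⟨z, ζ⟩, rfl⟩
    simp only [mem_ofPred_eq]
    rw [← sub_ne_zero, hid]
    exact mul_ne_zero (hE z) (exp_ne_zero _)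
  · rintro ⟨z, w⟩ hw
    simp only [mem_ofPred_eq] at hw
    by_cases hz : g z = 0
    -- Over a zero of `g` the fibre map is `ζ ↦ k z + E z * ζ`, an affine bijection.
    · refine ⟨(z, (w - k z) / (g z * k z - f z)), ?_⟩
      have := hE z
      simp only [hz, zero_mul, dslope_same, Complex.deriv_exp, exp_zero, mul_one, Prod.mk.injEq,
        true_and] at this ⊢
      rw [mul_div_cancel₀ _ this]
      ring
    · have hne : (w * g z - f z) / (g z * k z - f z) ≠ 0 :=
        div_ne_zero (sub_ne_zero.2 hw) (hE z)
      refine ⟨(z, log ((w * g z - f z) / (g z * k z - f z)) / g z), ?_⟩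
      have h := hid z (log ((w * g z - f z) / (g z * k z - f z)) / g z)
      rw [mul_div_cancel₀ _ hz, exp_log hne, mul_div_cancel₀ _ (hE z)] at h
      simp only [Prod.mk.injEq, true_and]
      rw [mul_div_cancel₀ _ hz]
      exact mul_right_cancel₀ hz (sub_left_injective h)
end
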